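/- Let R be a semiartinian von Neumann regular ring with primitive factors artinian, with right socle sequence (S_α | α ≤ σ+1), and suppose the socle Soc(R) = S_1 has countably many homogeneous components (λ_0 is countable). If R is right hereditary, then σ is a countable ordinal and each proper layer L_α (0 < α < σ) is countably generated. -/

import Mathlib

universe u

open Submodule Function

/-- The socle of a module: the supremum of all simple submodules. -/
def moduleSocle (R : Type*) (M : Type*) [Ring R] [AddCommGroup M] [Module R M] :
    Submodule R M :=
  sSup {W : Submodule R M | IsSimpleModule R ↥W}

/-- A ring is right semiartinian if every nonzero quotient of the right module `R_R`
has a nonzero socle. -/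
def IsRightSemiartinian (R : Type u) [Ring R] : Prop :=
  ∀ I : Submodule Rᵐᵒᵖ R, I ≠ ⊤ → moduleSocle Rᵐᵒᵖ (R ⧸ I) ≠ ⊥

/-- The right socle sequence of a ring: `S_0 = 0`, `S_{α+1}/S_α = Soc(R/S_α)`,
and unions at limits. -/
noncomputable def socleSeq (R : Type u) [Ring R] : Ordinal.{u} → Submodule Rᵐᵒᵖ R :=
  fun o => Ordinal.limitRecOn o ⊥
    (fun _ S => Submodule.comap S.mkQ (moduleSocle Rᵐᵒᵖ (R ⧸ S)))
    (fun o _ ih => ⨆ (β : Ordinal.{u}) (h : β < o), ih β h)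

/-- `S_α`, viewed as a submodule of `S_{α+1}`; the kernel of the `α`-th layer
epimorphism `π_α : S_{α+1} → S_{α+1}/S_α`. -/
noncomputable def layerKer (R : Type u) [Ring R] (α : Ordinal.{u}) :
    Submodule Rᵐᵒᵖ ↥(socleSeq R (α + 1)) :=
  (socleSeq R α).comap (socleSeq R (α + 1)).subtype

/-- The `α`-th layer `L_α = S_{α+1}/S_α` of a ring. -/
noncomputable abbrev Layer (R : Type u) [Ring R] (α : Ordinal.{u}) :=
  ↥(socleSeq R (α + 1)) ⧸ layerKer R α

/-- A module `M` is weakly `R`-projective if for each `0 < α ≤ σ`, every homomorphism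
`f : M → L_α` with finitely generated image factors through the `α`-th layer
epimorphism `π_α : S_{α+1} → L_α`. -/
def WeaklyRProjective (R : Type u) [Ring R] (σ : Ordinal.{u})
    (M : Type u) [AddCommGroup M] [Module Rᵐᵒᵖ M] : Prop :=
  ∀ α : Ordinal.{u}, 0 < α → α ≤ σ →
    ∀ f : M →ₗ[Rᵐᵒᵖ] Layer R α, (LinearMap.range f).FG →
      ∃ g : M →ₗ[Rᵐᵒᵖ] ↥(socleSeq R (α + 1)), (layerKer R α).mkQ ∘ₗ g = f

/-- A ring is von Neumann regular if each `r` admits `s` with `r * s * r = r`. -/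
def IsVNRegular (R : Type u) [Ring R] : Prop :=
  ∀ r : R, ∃ s : R, r * s * r = r

/-- The annihilator of a right `R`-module, as a submodule of the right module `R_R`. -/
def rightAnnihilator (R : Type u) [Ring R] (M : Type u) [AddCommGroup M]
    [Module Rᵐᵒᵖ M] : Submodule Rᵐᵒᵖ R where
  carrier := {r : R | ∀ m : M, MulOpposite.op r • m = 0}
  add_mem' := by
    intro a b ha hb m
    rw [MulOpposite.op_add, add_smul, ha m, hb m, add_zero]
  zero_mem' := by
    intro m
    rw [MulOpposite.op_zero, zero_smul]
  smul_mem' := by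
    intro c r hr m
    have h : MulOpposite.op (c • r) = c * MulOpposite.op r := by
      rw [MulOpposite.smul_eq_mul_unop, MulOpposite.op_mul, MulOpposite.op_unop]
    rw [h, mul_smul, hr m, smul_zero]

/-- A ring has (right) primitive factors artinian if, for each right primitive
(two-sided) ideal `P`, i.e. the annihilator of a simple right module, the factor
`R/P` is (right) artinian. -/
def HasPFA (R : Type u) [Ring R] : Prop :=
  ∀ (M : Type u) [AddCommGroup M] [Module Rᵐᵒᵖ M], IsSimpleModule Rᵐᵒᵖ M →
    IsArtinian Rᵐᵒᵖ (R ⧸ rightAnnihilator R M)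

/-- A submodule `H` of a right module `M` is a homogeneous component if it is the sum of
all submodules isomorphic to some fixed simple submodule `T` of `M`. -/
def IsHomogeneousComponent (R : Type u) [Ring R] (M : Type u) [AddCommGroup M]
    [Module Rᵐᵒᵖ M] (H : Submodule Rᵐᵒᵖ M) : Prop :=
  ∃ T : Submodule Rᵐᵒᵖ M, IsSimpleModule Rᵐᵒᵖ ↥T ∧
    H = sSup {W : Submodule Rᵐᵒᵖ M | Nonempty (↥W ≃ₗ[Rᵐᵒᵖ] ↥T)}

/-!
Over a right hereditary ring a homomorphism from a module `M` to the ring that vanishes on an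
essential submodule `N` of `M` is zero, because its image is projective and so its kernel is a
direct summand. If `M` is projective, then only the coordinates of a dual basis that occur on
generators of `N` are nonzero, so `M` needs no more generators than `N`, up to `ℵ₀`. Take for `M` a
right ideal `I` and for `N` its socle: it is essential as the ring is semiartinian, and it is a
direct summand of the semisimple module `Soc(R)`. Hence if `Soc(R)` is generated by `κ ≥ ℵ₀`
elements, so is every right ideal. For `I = S_{α+1}` this bounds the layers, and for `I = S_{κ⁺}`
regularity of `κ⁺` forces the socle sequence to stop before `κ⁺`.

In a semiprime ring, a homogeneous component of type `T` of the socle meets the annihilator of `T`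
trivially, hence embeds in the artinian module `R / Ann(T)` and is finitely generated; so `Soc(R)`
is countably generated when it has countably many homogeneous components.
-/

open scoped Cardinal

section SpanRank

variable {R : Type*} [Ring R] {M : Type u} [AddCommGroup M] [Module R M]

theorem spanRank_sSup_le {κ : Cardinal.{u}} (hκ : ℵ₀ ≤ κ) {s : Set (Submodule R M)}
    (hs : #s ≤ κ) (hsκ : ∀ p ∈ s, p.spanRank ≤ κ) : (sSup s).spanRank ≤ κ := by
  have hspan : span R (⋃ p : s, p.1.generators) = sSup s := by
    simp only [span_iUnion, span_generators, sSup_eq_iSup']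
  have hcard : #(⋃ p : s, p.1.generators) ≤ κ :=
    (Cardinal.mk_iUnion_le _).trans <| Cardinal.mul_le_of_le hκ hs <|
      ciSup_le' fun p => (generators_card p.1).trans_le (hsκ p p.2)
  exact hspan ▸ (spanRank_span_le_card _).trans hcard

theorem spanRank_le_of_le_of_isSemisimpleModule {p q : Submodule R M} [IsSemisimpleModule R q]
    (hpq : p ≤ q) : p.spanRank ≤ q.spanRank := by
  obtain ⟨π, hπ⟩ := IsSemisimpleModule.extension_property (inclusion hpq)
    (inclusion_injective hpq) LinearMap.id
  have hsurj : LinearMap.range π = ⊤ :=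
    LinearMap.range_eq_top.2 fun x => ⟨inclusion hpq x, LinearMap.congr_fun hπ x⟩
  calc p.spanRank = (LinearMap.range π).spanRank := by rw [hsurj, spanRank_top]
    _ ≤ (⊤ : Submodule R q).spanRank := spanRank_range_le π
    _ = q.spanRank := spanRank_top q

theorem exists_lt_eq_of_spanRank_lt_cof {F : Ordinal.{u} → Submodule R M} (hF : Monotone F)
    {o : Ordinal.{u}} (ho : F o = ⨆ β < o, F β) (hcof : (F o).spanRank < o.cof) :
    ∃ β < o, F β = F o := by
  have ho0 : o ≠ 0 := by
    rintro rfl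
    simp at hcof
  have : Nonempty (Set.Iio o) := ⟨⟨0, pos_iff_ne_zero.2 ho0⟩⟩
  have hdir : Directed (· ≤ ·) fun β : Set.Iio o => F β :=
    (hF.comp (Subtype.mono_coe _)).directed_le
  have hmem (x : (F o).generators) : ∃ β < o, (x : M) ∈ F β := by
    have hx : (x : M) ∈ ⨆ β : Set.Iio o, F β :=
      (ho.trans iSup_subtype').le ((span_generators (F o)).le (subset_span x.2))
    obtain ⟨β, hβ⟩ := (mem_iSup_of_directed _ hdir).1 hx
    exact ⟨β, β.2, hβ⟩
  choose β hβ hxβ using hmem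
  have hlt : ⨆ x, β x < o :=
    Ordinal.iSup_lt_of_lt_cof ((generators_card (F o)).trans_lt hcof) hβ
  refine ⟨_, hlt, (hF hlt.le).antisymm ?_⟩
  calc F o = span R (F o).generators := (span_generators _).symm
    _ ≤ F (⨆ x, β x) := span_le.2 fun x hx => hF (Ordinal.le_iSup β ⟨x, hx⟩) (hxβ ⟨x, hx⟩)

end SpanRank

section Essential

variable {R : Type*} [Ring R]

/-- A submodule `N` of `M` is essential (or large) if it meets every nonzero submodule of `M`
nontrivially. -/
def IsEssential {M : Type*} [AddCommGroup M] [Module R M] (N : Submodule R M) : Prop :=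
  ∀ K : Submodule R M, Disjoint K N → K = ⊥

theorem IsEssential.eq_zero_of_le_ker {M P : Type*} [AddCommGroup M] [Module R M]
    [AddCommGroup P] [Module R P] {N : Submodule R M} (hN : IsEssential N) (f : M →ₗ[R] P)
    [Module.Projective R (LinearMap.range f)] (hf : N ≤ LinearMap.ker f) : f = 0 := by
  obtain ⟨g, hg⟩ := f.rangeRestrict.exists_rightInverse_of_surjective f.range_rangeRestrict
  have hfg (y : LinearMap.range f) : f (g y) = y :=
    congrArg Subtype.val (LinearMap.congr_fun hg y)
  have hdisj : Disjoint (LinearMap.range g) N := by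
    rw [disjoint_def]
    rintro _ ⟨y, rfl⟩ hy
    have hy0 : y = 0 := Subtype.ext ((hfg y).symm.trans (hf hy))
    rw [hy0, map_zero]
  have hg0 : g = 0 := LinearMap.range_eq_bot.1 (hN _ hdisj)
  ext x
  simpa [hg0] using (hfg (f.rangeRestrict x)).symm

theorem IsEssential.spanRank_top_le {M : Type u} [AddCommGroup M] [Module R M]
    [Module.Projective R M] (hR : ∀ I : Ideal R, Module.Projective R I) {N : Submodule R M}
    (hN : IsEssential N) {κ : Cardinal.{u}} (hκ : ℵ₀ ≤ κ) (hNκ : N.spanRank ≤ κ) :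
    (⊤ : Submodule R M).spanRank ≤ κ := by
  obtain ⟨s, hs⟩ := Module.projective_def'.1 ‹Module.Projective R M›
  let E : Set M := ⋃ d : N.generators, (s d).support
  have hE : #E ≤ κ :=
    (Cardinal.mk_iUnion_le _).trans <|
      Cardinal.mul_le_of_le hκ ((generators_card N).trans_le hNκ) <|
        ciSup_le' fun d => (Cardinal.lt_aleph0_of_finite _).le.trans hκ
  have hcoord (i : M) (hi : i ∉ E) : Finsupp.lapply i ∘ₗ s = 0 := by
    have := hR (LinearMap.range (Finsupp.lapply i ∘ₗ s))
    refine hN.eq_zero_of_le_ker _ ?_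
    rw [← span_generators N, span_le]
    intro d hd
    have hid : i ∉ (s d).support := fun h => hi (Set.mem_iUnion.2 ⟨⟨d, hd⟩, h⟩)
    exact Finsupp.notMem_support_iff.1 hid
  have hspan : span R E = ⊤ := by
    refine eq_top_iff.2 fun x _ => ?_
    rw [← LinearMap.id_apply (R := R) x, ← hs, LinearMap.comp_apply,
      Finsupp.linearCombination_apply]
    refine sum_mem fun i hi => smul_mem _ _ (subset_span ?_)
    by_contra hiE
    exact Finsupp.mem_support_iff.1 hi (LinearMap.congr_fun (hcoord i hiE) x)
  exact hspan ▸ (spanRank_span_le_card E).trans hE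

end Essential

section Socle

variable {R : Type*} [Ring R]

instance isSemisimpleModule_moduleSocle (M : Type*) [AddCommGroup M] [Module R M] :
    IsSemisimpleModule R (moduleSocle R M) := by
  rw [moduleSocle, sSup_eq_iSup]
  refine isSemisimpleModule_biSup_of_isSemisimpleModule_submodule fun W hW => ?_
  have : IsSimpleModule R W := hW
  infer_instance

theorem map_moduleSocle_le {M N : Type*} [AddCommGroup M] [Module R M] [AddCommGroup N]
    [Module R N] (f : M →ₗ[R] N) : (moduleSocle R M).map f ≤ moduleSocle R N := by
  rw [map_le_iff_le_comap]
  refine sSup_le fun W (hW : IsSimpleModule R W) => map_le_iff_le_comap.1 ?_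
  rw [← LinearMap.range_domRestrict]
  rcases (f.domRestrict W).injective_or_eq_zero with hinj | hzero
  · exact le_sSup (IsSimpleModule.congr (LinearEquiv.ofInjective _ hinj).symm)
  · rw [hzero, LinearMap.range_zero]
    exact bot_le

theorem moduleSocle_eq_sSup_isotypicComponents (M : Type*) [AddCommGroup M] [Module R M] :
    moduleSocle R M = sSup (isotypicComponents R M) := by
  refine le_antisymm (sSup_le fun W hW => ?_) (sSup_le ?_)
  · exact W.le_isotypicComponent.trans (le_sSup ⟨W, hW, rfl⟩)
  · rintro _ ⟨T, hT, rfl⟩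
    exact sSup_le_sSup fun W ⟨e⟩ => IsSimpleModule.congr e

theorem spanRank_moduleSocle_submodule_le {M : Type u} [AddCommGroup M] [Module R M]
    (N : Submodule R M) : (moduleSocle R N).spanRank ≤ (moduleSocle R M).spanRank := by
  rw [← spanRank_map_eq_of_injective N.subtype N.injective_subtype]
  exact spanRank_le_of_le_of_isSemisimpleModule (map_moduleSocle_le N.subtype)

theorem annihilator_le_annihilator_isotypicComponent (M T : Type*)
    [AddCommGroup M] [Module R M] [AddCommGroup T] [Module R T] :
    Module.annihilator R T ≤ (isotypicComponent R M T).annihilator := by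
  rw [isotypicComponent, sSup_eq_iSup', annihilator_iSup]
  exact le_iInf fun ⟨W, ⟨e⟩⟩ => e.annihilator_eq.ge

end Socle

section Semiartinian

variable {R : Type u} [Ring R]

theorem IsRightSemiartinian.moduleSocle_ne_bot (hR : IsRightSemiartinian R) (M : Type*)
    [AddCommGroup M] [Module Rᵐᵒᵖ M] [Nontrivial M] : moduleSocle Rᵐᵒᵖ M ≠ ⊥ := by
  obtain ⟨m, hm⟩ := exists_ne (0 : M)
  let f : R →ₗ[Rᵐᵒᵖ] M :=
    LinearMap.toSpanSingleton Rᵐᵒᵖ M m ∘ₗ (MulOpposite.opLinearEquiv Rᵐᵒᵖ).toLinearMap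
  have hf : LinearMap.ker f ≠ ⊤ := fun h => hm <| by
    simpa [f] using LinearMap.congr_fun (LinearMap.ker_eq_top.1 h) 1
  have hinj : Injective ((LinearMap.ker f).liftQ f le_rfl) :=
    LinearMap.ker_eq_bot.1 (ker_liftQ_eq_bot _ _ _ le_rfl)
  intro hM
  refine hR _ hf (((map_injective_of_injective hinj).eq_iff' (map_bot _)).1 ?_)
  exact le_bot_iff.1 ((map_moduleSocle_le _).trans hM.le)

theorem IsRightSemiartinian.isEssential_moduleSocle (hR : IsRightSemiartinian R) (M : Type*)
    [AddCommGroup M] [Module Rᵐᵒᵖ M] : IsEssential (moduleSocle Rᵐᵒᵖ M) := by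
  intro K hK
  by_contra hK0
  have : Nontrivial K := nontrivial_iff_ne_bot.2 hK0
  refine hR.moduleSocle_ne_bot K <|
    ((map_injective_of_injective K.injective_subtype).eq_iff' (map_bot _)).1 ?_
  exact le_bot_iff.1 (hK (map_subtype_le _ _) (map_moduleSocle_le _))

theorem projective_ideal_mulOpposite
    (hher : ∀ I : Submodule Rᵐᵒᵖ R, Module.Projective Rᵐᵒᵖ I) (I : Ideal Rᵐᵒᵖ) :
    Module.Projective Rᵐᵒᵖ I := by
  let e : Rᵐᵒᵖ ≃ₗ[Rᵐᵒᵖ] R := (MulOpposite.opLinearEquiv Rᵐᵒᵖ).symm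
  have := hher (Submodule.map e.toLinearMap I)
  exact Module.Projective.of_equiv (e.submoduleMap I).symm

theorem IsRightSemiartinian.spanRank_le_of_hereditary (hR : IsRightSemiartinian R)
    (hher : ∀ I : Submodule Rᵐᵒᵖ R, Module.Projective Rᵐᵒᵖ I) {κ : Cardinal.{u}} (hκ : ℵ₀ ≤ κ)
    (hsoc : (moduleSocle Rᵐᵒᵖ R).spanRank ≤ κ) (I : Submodule Rᵐᵒᵖ R) : I.spanRank ≤ κ := by
  have := hher I
  rw [← spanRank_top]
  exact (hR.isEssential_moduleSocle I).spanRank_top_le (projective_ideal_mulOpposite hher) hκ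
    ((spanRank_moduleSocle_submodule_le I).trans hsoc)

end Semiartinian

section HomogeneousComponents

variable {R : Type u} [Ring R]

theorem disjoint_isotypicComponent_rightAnnihilator
    (hR : ∀ r : R, (∀ s, r * s * r = 0) → r = 0) (T : Type u) [AddCommGroup T] [Module Rᵐᵒᵖ T] :
    Disjoint (isotypicComponent Rᵐᵒᵖ R T) (rightAnnihilator R T) := by
  rw [disjoint_def]
  intro r hr hrT
  refine hR r fun s => ?_
  have hr' : MulOpposite.op r ∈ (isotypicComponent Rᵐᵒᵖ R T).annihilator :=
    annihilator_le_annihilator_isotypicComponent R T (Module.mem_annihilator.2 hrT)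
  exact mem_annihilator.1 hr' (r * s) (smul_mem _ (MulOpposite.op s) hr)

theorem isotypicComponent_fg (hR : ∀ r : R, (∀ s, r * s * r = 0) → r = 0) (T : Type u)
    [AddCommGroup T] [Module Rᵐᵒᵖ T] [IsSemisimpleModule Rᵐᵒᵖ T]
    [IsArtinian Rᵐᵒᵖ (R ⧸ rightAnnihilator R T)] : (isotypicComponent Rᵐᵒᵖ R T).FG := by
  have hinj : Injective ((rightAnnihilator R T).mkQ.domRestrict (isotypicComponent Rᵐᵒᵖ R T)) := by
    rw [← LinearMap.ker_eq_bot, LinearMap.ker_domRestrict, ker_mkQ, ← disjoint_iff_comap_eq_bot]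
    exact disjoint_isotypicComponent_rightAnnihilator hR T
  have : IsArtinian Rᵐᵒᵖ (isotypicComponent Rᵐᵒᵖ R T) := isArtinian_of_injective _ hinj
  exact Module.Finite.iff_fg.1 (IsSemisimpleModule.finite_tfae.out 2 0 |>.1 this)

theorem IsVNRegular.eq_zero_of_forall_mul_mul_eq_zero (hR : IsVNRegular R) (r : R)
    (hr : ∀ s, r * s * r = 0) : r = 0 := by
  obtain ⟨s, hs⟩ := hR r
  rw [← hs, hr]

theorem HasPFA.spanRank_moduleSocle_le (hpfa : HasPFA R)
    (hR : ∀ r : R, (∀ s, r * s * r = 0) → r = 0) {κ : Cardinal.{u}} (hκ : ℵ₀ ≤ κ)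
    (hcard : #{H : Submodule Rᵐᵒᵖ R | IsHomogeneousComponent R R H} ≤ κ) :
    (moduleSocle Rᵐᵒᵖ R).spanRank ≤ κ := by
  rw [moduleSocle_eq_sSup_isotypicComponents]
  refine spanRank_sSup_le hκ hcard ?_
  rintro _ ⟨T, hT, rfl⟩
  have := hpfa T hT
  exact (spanRank_finite_iff_fg.2 (isotypicComponent_fg hR T)).le.trans hκ

end HomogeneousComponents

section SocleSequence

variable (R : Type u) [Ring R]

theorem socleSeq_add_one (α : Ordinal.{u}) :
    socleSeq R (α + 1) =
      (moduleSocle Rᵐᵒᵖ (R ⧸ socleSeq R α)).comap (socleSeq R α).mkQ := by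
  rw [socleSeq, Ordinal.limitRecOn_add_one]
  rfl

theorem socleSeq_of_isSuccLimit {α : Ordinal.{u}} (hα : Order.IsSuccLimit α) :
    socleSeq R α = ⨆ β < α, socleSeq R β := by
  rw [socleSeq, Ordinal.limitRecOn_limit _ _ _ _ hα]
  rfl

theorem socleSeq_monotone : Monotone (socleSeq R) := by
  intro α β hαβ
  induction β using Ordinal.limitRecOn with
  | zero => rw [nonpos_iff_eq_zero.1 hαβ]
  | add_one β ih =>
    rcases hαβ.lt_or_eq with hlt | rfl
    · refine (ih (Order.lt_add_one_iff.1 hlt)).trans ?_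
      rw [socleSeq_add_one]
      exact le_comap_mkQ _ _
    · exact le_rfl
  | limit β hβ ih =>
    rcases hαβ.lt_or_eq with hlt | rfl
    · rw [socleSeq_of_isSuccLimit R hβ]
      exact le_iSup₂_of_le α hlt le_rfl
    · exact le_rfl

variable {R}

theorem IsRightSemiartinian.socleSeq_eq_top (hR : IsRightSemiartinian R) {α : Ordinal.{u}}
    (hα : socleSeq R (α + 1) = socleSeq R α) : socleSeq R α = ⊤ := by
  by_contra hne
  refine hR _ hne ?_
  rw [← map_comap_eq_of_surjective (mkQ_surjective (socleSeq R α)) (moduleSocle _ _),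
    ← socleSeq_add_one, hα, mkQ_map_self]

theorem IsRightSemiartinian.exists_lt_ord_succ_socleSeq_eq_top (hR : IsRightSemiartinian R)
    {κ : Cardinal.{u}} (hκ : ℵ₀ ≤ κ) (hgen : (socleSeq R (Order.succ κ).ord).spanRank ≤ κ) :
    ∃ γ < (Order.succ κ).ord, socleSeq R γ = ⊤ := by
  have hlim : Order.IsSuccLimit (Order.succ κ).ord :=
    Cardinal.isSuccLimit_ord (hκ.trans (Order.le_succ κ))
  obtain ⟨γ, hγ, hγeq⟩ := exists_lt_eq_of_spanRank_lt_cof (socleSeq_monotone R)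
    (socleSeq_of_isSuccLimit R hlim) <| by
      rw [(Cardinal.isRegular_succ hκ).cof_ord]
      exact Order.lt_succ_of_le hgen
  refine ⟨γ, hγ, hR.socleSeq_eq_top (le_antisymm ?_ (socleSeq_monotone R le_self_add))⟩
  exact hγeq ▸ socleSeq_monotone R (Order.add_one_le_of_lt hγ)

theorem spanRank_layer_le (α : Ordinal.{u}) :
    (⊤ : Submodule Rᵐᵒᵖ (Layer R α)).spanRank ≤ (socleSeq R (α + 1)).spanRank := by
  rw [← spanRank_top (socleSeq R (α + 1)), ← range_mkQ]
  exact spanRank_range_le _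

end SocleSequence

theorem countable_layers_of_hereditary_general (R : Type u) [Ring R]
    (hsa : IsRightSemiartinian R)
    (hher : ∀ I : Submodule Rᵐᵒᵖ R, Module.Projective Rᵐᵒᵖ ↥I)
    {κ : Cardinal.{u}} (hκ : ℵ₀ ≤ κ) (hsoc : (moduleSocle Rᵐᵒᵖ R).spanRank ≤ κ)
    (σ : Ordinal.{u}) (hσ : IsLeast {o : Ordinal.{u} | socleSeq R o = ⊤} (σ + 1)) :
    σ.card ≤ κ ∧ ∀ α : Ordinal.{u}, (⊤ : Submodule Rᵐᵒᵖ (Layer R α)).spanRank ≤ κ := by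
  have hgen := hsa.spanRank_le_of_hereditary hher hκ hsoc
  refine ⟨?_, fun α => (spanRank_layer_le α).trans (hgen _)⟩
  obtain ⟨γ, hγ, htop⟩ := hsa.exists_lt_ord_succ_socleSeq_eq_top hκ (hgen _)
  have hσγ : σ ≤ γ := le_self_add.trans (hσ.2 htop)
  exact Order.lt_succ_iff.1 (Cardinal.lt_ord.1 (hσγ.trans_lt hγ))

/-- Lemma 9, (1) ⟹ (2), of the paper: if a semiartinian von Neumann
regular ring with primitive factors artinian has a socle with countably many homogeneous
components and is right hereditary, then `σ` is countable and all proper layers are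
countably generated. -/
theorem countable_layers_of_hereditary (R : Type u) [Ring R]
    (hsa : IsRightSemiartinian R) (hvnr : IsVNRegular R) (hpfa : HasPFA R)
    (σ : Ordinal.{u}) (hσ : IsLeast {o : Ordinal.{u} | socleSeq R o = ⊤} (σ + 1))
    (hLambda0 : {H : Submodule Rᵐᵒᵖ R | IsHomogeneousComponent R R H}.Countable)
    (hher : ∀ I : Submodule Rᵐᵒᵖ R, Module.Projective Rᵐᵒᵖ ↥I) :
    σ.card ≤ Cardinal.aleph0 ∧
    ∀ α : Ordinal.{u}, 0 < α → α < σ →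
      ∃ S : Set (Layer R α), S.Countable ∧ Submodule.span Rᵐᵒᵖ S = ⊤ := by
  have hsoc := hpfa.spanRank_moduleSocle_le hvnr.eq_zero_of_forall_mul_mul_eq_zero le_rfl
    (Cardinal.le_aleph0_iff_set_countable.2 hLambda0)
  obtain ⟨hcard, hgen⟩ := countable_layers_of_hereditary_general R hsa hher le_rfl hsoc σ hσ
  refine ⟨hcard, fun α _ _ => ?_⟩
  obtain ⟨S, hS, hspan⟩ := (FG.spanRank_le_iff_exists_span_set_card_le _).1 (hgen α)
  exact ⟨S, Cardinal.le_aleph0_iff_set_countable.1 hS, hspan⟩
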